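/- arXiv:1608.03499 — 2 statements merged into one kernel-verified Lean document; each statement's English description precedes it below -/
import Mathlib

section
/- If char k = 2, then the principal minor ideal J_n is a primary ideal whose radical is the second Veronese ideal I_n (i.e., J_n is primary over I_n). -/
open scoped BigOperators

namespace Veronese

open MvPolynomial

/-- `c m = C(m,2)`. -/
def c (m : ℕ) : ℕ := m.choose 2

variable (n : ℕ)

/-- multiplicity (as ℤ) of the index `i` in the unordered pair `s`. -/
def wt (s : Sym2 (Fin n)) : Fin n → ℤ :=
  Sym2.lift ⟨fun a b i => (if i = a then 1 else 0) + (if i = b then 1 else 0),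
    fun a b => funext fun i => add_comm _ _⟩ s

/-- The Veronese grading map `V_n : ℤ^P → ℤ^n`, sending `e_{ij} ↦ e_i + e_j`. -/
def Vmap : (Sym2 (Fin n) → ℤ) →ₗ[ℤ] (Fin n → ℤ) where
  toFun u := fun i => ∑ s : Sym2 (Fin n), u s * wt n s i
  map_add' u v := funext fun i => by
    simp [add_mul, Finset.sum_add_distrib]
  map_smul' m u := funext fun i => by
    simp [Finset.mul_sum, smul_eq_mul, mul_assoc]

/-- The Veronese lattice `L_n = ker V_n`. -/
def Llat : Submodule ℤ (Sym2 (Fin n) → ℤ) := LinearMap.ker (Vmap n)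

/-- standard basis vector `e_{ij}` of `ℤ^P`. -/
def e (i j : Fin n) : Sym2 (Fin n) → ℤ := Pi.single s(i, j) 1

lemma e_comm (i j : Fin n) : e n i j = e n j i := by
  unfold e; rw [Sym2.eq_swap]

/-- `[ij|ij] = e_{ii} + e_{jj} - 2 e_{ij}`. -/
def minorVec (i j : Fin n) : Sym2 (Fin n) → ℤ := e n i i + e n j j - 2 • e n i j

/-- The principal minor lattice `L'_n`. -/
def L'lat : Submodule ℤ (Sym2 (Fin n) → ℤ) :=
  Submodule.span ℤ {v | ∃ i j : Fin n, i < j ∧ v = minorVec n i j}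

/-- the last index `n` (zero-based: `n-1`) of `Fin n`. -/
def lastIdx (hn : 0 < n) : Fin n := ⟨n - 1, Nat.sub_lt hn one_pos⟩

/-- embedding `[n-1] → [n]`. -/
def ι : Fin (n - 1) → Fin n := Fin.castLE (Nat.sub_le n 1)

/-- `[in|jn] = e_{ij} + e_{nn} - e_{in} - e_{jn}` for `i,j ∈ [n-1]`. -/
def Bvec (hn : 0 < n) : Sym2 (Fin (n - 1)) → (Sym2 (Fin n) → ℤ) :=
  Sym2.lift ⟨fun i j =>
      e n (ι n i) (ι n j) + e n (lastIdx n hn) (lastIdx n hn)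
        - e n (ι n i) (lastIdx n hn) - e n (ι n j) (lastIdx n hn),
    fun i j => by dsimp only; rw [e_comm n (ι n i) (ι n j)]; ring⟩

/-- The family `B'`: `[in|in]` on the diagonal, `2[in|jn]` off it. -/
noncomputable def B'vec (hn : 0 < n) (s : Sym2 (Fin (n - 1))) : Sym2 (Fin n) → ℤ :=
  if s.IsDiag then Bvec n hn s else 2 • Bvec n hn s

/-- multiplicity (as ℕ) of the index `i` in the unordered pair `s`. -/
def wtN (s : Sym2 (Fin n)) : Fin n → ℕ :=
  Sym2.lift ⟨fun a b i => (if i = a then 1 else 0) + (if i = b then 1 else 0),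
    fun a b => funext fun i => add_comm _ _⟩ s

/-- The Veronese degree of an exponent vector `u ∈ ℕ^P`. -/
def VN (u : Sym2 (Fin n) →₀ ℕ) : Fin n → ℕ := fun i => ∑ s : Sym2 (Fin n), u s * wtN n s i

/-- The fiber `V_n^{-1}[b] = {u ∈ ℕ^P : V_n u = b}`. -/
def fiber (b : Fin n → ℕ) : Set (Sym2 (Fin n) →₀ ℕ) := {u | VN n u = b}

/-- natural inclusion `ℕ^P → ℤ^P`. -/
def toZ (u : Sym2 (Fin n) →₀ ℕ) : Sym2 (Fin n) → ℤ := fun s => (u s : ℤ)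

lemma fiber_finite (b : Fin n → ℕ) : (fiber n b).Finite := by
  classical
  have hsub : fiber n b ⊆
      ↑(Finset.Iic ((Finsupp.equivFunOnFinite.symm fun _ => ∑ i, b i) : Sym2 (Fin n) →₀ ℕ)) := by
    intro u hu
    simp only [Finset.coe_Iic, Set.mem_Iic, Finsupp.le_def]
    intro s
    induction s using Sym2.ind with
    | _ i j =>
      have h1 : u s(i, j) * wtN n s(i, j) i ≤ VN n u i :=
        Finset.single_le_sum (f := fun s => u s * wtN n s i)
          (fun s _ => Nat.zero_le _) (Finset.mem_univ s(i, j))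
      have h2 : 1 ≤ wtN n s(i, j) i := by
        simp only [wtN, Sym2.lift_mk, if_pos rfl]
        exact Nat.le_add_right 1 _
      have h3 : u s(i, j) ≤ b i := by
        have hb : VN n u i = b i := congrFun hu i
        calc u s(i, j) ≤ u s(i, j) * wtN n s(i, j) i := Nat.le_mul_of_pos_right _ h2
          _ ≤ VN n u i := h1
          _ = b i := hb
      calc u s(i, j) ≤ b i := h3
        _ ≤ ∑ i, b i := Finset.single_le_sum (fun _ _ => Nat.zero_le _) (Finset.mem_univ _)
        _ = (Finsupp.equivFunOnFinite.symm fun _ => ∑ i, b i) s(i, j) := by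
            simp
  exact Set.Finite.subset (Finset.finite_toSet _) hsub

variable (k : Type*) [Field k]

/-- the polynomial ring `k[x_{ij}]`. -/
abbrev R := MvPolynomial (Sym2 (Fin n)) k

/-- The principal minor ideal `J_n`. -/
noncomputable def Jideal : Ideal (R n k) :=
  Ideal.span {f | ∃ i j : Fin n, i < j ∧ f = X s(i, i) * X s(j, j) - X s(i, j) ^ 2}

/-- The map `x_{ij} ↦ t_i t_j`. -/
noncomputable def veroHom : R n k →ₐ[k] MvPolynomial (Fin n) k :=
  aeval fun s => Sym2.lift ⟨fun a b => X a * X b, fun a b => mul_comm _ _⟩ s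

/-- The second Veronese ideal `I_n`. -/
noncomputable def Iideal : Ideal (R n k) := RingHom.ker (veroHom n k)

/-- A ℤ₂-twisting: an automorphism sending each variable to ± itself. -/
def IsTwisting (φ : R n k ≃ₐ[k] R n k) : Prop :=
  ∀ s : Sym2 (Fin n), φ (X s) = X s ∨ φ (X s) = - X s

/-- `f` is V_n-homogeneous of degree `b`. -/
def VHomog (f : R n k) (b : Fin n → ℕ) : Prop := ∀ u ∈ f.support, VN n u = b

/-- The fiber over `b` as a finite set. -/
noncomputable def fiberFinset (b : Fin n → ℕ) : Finset (Sym2 (Fin n) →₀ ℕ) :=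
  (fiber_finite n b).toFinset

/-- generating function of the canonical (0/1 off-diagonal) representatives of
the fiber over `b`. -/
noncomputable def pplusAt (b : Fin n → ℕ) : R n k :=
  ∑ u ∈ (fiberFinset n b).filter (fun u => ∀ s : Sym2 (Fin n), ¬s.IsDiag → u s ≤ 1),
    monomial u (1 : k)

/-- `p⁺_{n,j}` (for `n` odd): fiber over `(n-2,…,n-2) + e_j`. -/
noncomputable def pplusOdd (j : Fin n) : R n k :=
  pplusAt n k fun i => (n - 2) + if i = j then 1 else 0

/-- `p⁺_n` (for `n` even): fiber over `(n-2,…,n-2)`. -/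
noncomputable def pplusEven : R n k :=
  pplusAt n k fun _ => n - 2

/-- `p_n = ∏_{i<j∈[n-1]} (x_{ij} x_{nn} + x_{in} x_{jn})`. -/
noncomputable def pn (hn : 0 < n) : R n k :=
  ∏ p ∈ Finset.univ.filter (fun p : Fin (n - 1) × Fin (n - 1) => p.1 < p.2),
    (X s(ι n p.1, ι n p.2) * X s(lastIdx n hn, lastIdx n hn)
      + X s(ι n p.1, lastIdx n hn) * X s(ι n p.2, lastIdx n hn))


/-- exponent of `t_i t_j`. -/
noncomputable def tdeg (s : Sym2 (Fin n)) : Fin n →₀ ℕ :=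
  Sym2.lift ⟨fun a b => Finsupp.single a 1 + Finsupp.single b 1,
    fun a b => add_comm _ _⟩ s

/-- class of the variable `s` in the group `(ℤ/2)^P`, trivial on the diagonal. -/
noncomputable def gam (s : Sym2 (Fin n)) : Sym2 (Fin n) → ZMod 2 :=
  open Classical in if s.IsDiag then 0 else Pi.single s 1

lemma veroHom_X (s : Sym2 (Fin n)) : veroHom n k (X s) = monomial (tdeg n s) 1 := by
  induction s using Sym2.ind with
  | _ i j =>
    rw [veroHom, aeval_X]
    simp [tdeg, X, monomial_mul]

/-- The target of the fine grading map. -/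
abbrev Tgt := AddMonoidAlgebra (MvPolynomial (Fin n) k) (Sym2 (Fin n) → ZMod 2)

/-- The map `x_{ij} ↦ t_i t_j g_{ij}`. -/
noncomputable def Phi : R n k →ₐ[k] Tgt n k :=
  aeval fun s => AddMonoidAlgebra.single (gam n s) (monomial (tdeg n s) (1 : k))

/-- The map `t_i ↦ x_{ii}`. -/
noncomputable def dlt : MvPolynomial (Fin n) k →ₐ[k] R n k :=
  aeval fun i => X s(i, i)

lemma two_gam (s : Sym2 (Fin n)) : 2 • gam n s = 0 := by
  ext t
  have : ∀ a : ZMod 2, 2 • a = 0 := by decide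
  exact this _

lemma J_le_ker : Jideal n k ≤ RingHom.ker (Phi n k) := by
  rw [Jideal, Ideal.span_le]
  rintro f ⟨i, j, hij, rfl⟩
  have hd : ∀ i : Fin n, gam n s(i, i) = 0 := fun i => by simp [gam]
  simp only [SetLike.mem_coe, RingHom.mem_ker, Phi, map_sub, map_mul, map_pow, aeval_X, hd,
    AddMonoidAlgebra.single_mul_single, AddMonoidAlgebra.single_pow, two_gam, monomial_mul,
    monomial_pow, tdeg, Sym2.lift_mk]
  rw [sub_eq_zero]
  have h1 : (Finsupp.single i 1 + Finsupp.single i 1 + (Finsupp.single j 1 + Finsupp.single j 1) :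
      Fin n →₀ ℕ) = 2 • (Finsupp.single i 1 + Finsupp.single j 1) := by
    rw [two_nsmul]; abel
  rw [h1]
  simp

lemma sq_mk (s : Sym2 (Fin n)) : Ideal.Quotient.mk (Jideal n k) (X s) ^ 2 =
    Ideal.Quotient.mk (Jideal n k) (dlt n k (veroHom n k (X s))) := by
  induction s using Sym2.ind with
  | _ i j =>
    have key : ∀ i j : Fin n, i < j → Ideal.Quotient.mk (Jideal n k) (X s(i, j)) ^ 2 =
        Ideal.Quotient.mk (Jideal n k) (X s(i, i) * X s(j, j)) := by
      intro i j h
      rw [← map_pow, eq_comm, Ideal.Quotient.eq]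
      exact Ideal.subset_span ⟨i, j, h, rfl⟩
    have h2 : dlt n k (veroHom n k (X s(i, j))) = X s(i, i) * X s(j, j) := by
      simp [veroHom, dlt]
    rw [h2]
    rcases lt_trichotomy i j with h | h | h
    · exact key i j h
    · subst h; rw [map_mul, sq]
    · rw [Sym2.eq_swap, key j i h, mul_comm]

lemma sq_eq [CharP k 2] (f : R n k) : Ideal.Quotient.mk (Jideal n k) (f ^ 2) =
    Ideal.Quotient.mk (Jideal n k) (dlt n k (map (frobenius k 2) (veroHom n k f))) := by
  have : (Ideal.Quotient.mk (Jideal n k)).comp (frobenius (R n k) 2) =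
      (Ideal.Quotient.mk (Jideal n k)).comp ((dlt n k : MvPolynomial (Fin n) k →+* R n k).comp
        ((map (frobenius k 2)).comp (veroHom n k : R n k →+* MvPolynomial (Fin n) k))) := by
    apply MvPolynomial.ringHom_ext
    · intro r
      simp only [RingHom.comp_apply, frobenius_def, RingHom.coe_coe, ← algebraMap_eq, AlgHom.commutes]
      simp [algebraMap_eq, frobenius_def]
    · intro s
      have := sq_mk n k s
      rw [veroHom_X] at this
      simp [frobenius_def, veroHom_X, this]
  exact RingHom.congr_fun this f

lemma Phi_dlt (h : MvPolynomial (Fin n) k) :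
    Phi n k (dlt n k h) = algebraMap _ (Tgt n k) (expand 2 h) := by
  have : (Phi n k).comp (dlt n k) =
      (IsScalarTower.toAlgHom k (MvPolynomial (Fin n) k) (Tgt n k)).comp (expand 2) := by
    apply MvPolynomial.algHom_ext
    intro i
    have hd : gam n s(i, i) = 0 := by simp [gam]
    rw [AlgHom.comp_apply, AlgHom.comp_apply, dlt, aeval_X, Phi, aeval_X, hd, expand_X, X,
      monomial_pow]
    simp [tdeg, ← Finsupp.single_add]
  exact DFunLike.congr_fun this h

/-- the invariants of an exponent vector. -/
noncomputable def keyv (u : Sym2 (Fin n) →₀ ℕ) : (Sym2 (Fin n) → ZMod 2) × (Fin n →₀ ℕ) :=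
  (∑ s, u s • gam n s, ∑ s, u s • tdeg n s)

lemma monomial_eq_prod (u : Sym2 (Fin n) →₀ ℕ) :
    monomial u (1 : k) = ∏ s, (X s : R n k) ^ u s := by
  rw [monomial_eq, Finsupp.prod_fintype _ _ (by simp)]; simp

lemma Phi_monomial (u : Sym2 (Fin n) →₀ ℕ) : Phi n k (monomial u 1) =
    AddMonoidAlgebra.single (keyv n u).1 (monomial (keyv n u).2 1) := by
  rw [monomial_eq_prod, map_prod]
  simp only [map_pow, Phi, aeval_X, AddMonoidAlgebra.single_pow, AddMonoidAlgebra.prod_single,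
    monomial_pow, one_pow, keyv]
  congr 1
  rw [monomial_sum_one]

lemma keyv_fst (u : Sym2 (Fin n) →₀ ℕ) (s : Sym2 (Fin n)) (hs : ¬ s.IsDiag) :
    (keyv n u).1 s = (u s : ZMod 2) := by
  classical
  simp only [keyv, Finset.sum_apply, Pi.smul_apply]
  rw [Finset.sum_eq_single s]
  · simp [gam, hs]
  · intro t _ h
    unfold gam
    split_ifs
    · simp
    · simp [Pi.single_apply, h.symm]
  · simp

open Classical in
/-- exponents of the reduced monomial -/
noncomputable def red (u : Sym2 (Fin n) →₀ ℕ) (s : Sym2 (Fin n)) : ℕ :=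
  if s.IsDiag then 0 else u s % 2

lemma red_exists (u : Sym2 (Fin n) →₀ ℕ) (s : Sym2 (Fin n)) : ∃ m : Fin n →₀ ℕ,
    u s • tdeg n s = 2 • m + red n u s • tdeg n s ∧
    Ideal.Quotient.mk (Jideal n k) (X s ^ u s) =
      Ideal.Quotient.mk (Jideal n k) (dlt n k (monomial m 1) * X s ^ red n u s) := by
  by_cases hs : s.IsDiag
  · induction s using Sym2.ind with
    | _ i j =>
      obtain rfl : i = j := by simpa using hs
      refine ⟨Finsupp.single i (u s(i, i)), ?_, ?_⟩
      · ext t; simp [red, tdeg, Finsupp.single_apply]; split_ifs <;> omega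
      · rw [dlt, aeval_monomial]; simp [red]
  · refine ⟨(u s / 2) • tdeg n s, ?_, ?_⟩
    · simp only [red, hs, if_false]
      rw [← mul_smul, ← add_smul, Nat.div_add_mod]
    · have h : monomial ((u s / 2) • tdeg n s) (1 : k) = veroHom n k (X s) ^ (u s / 2) := by
        rw [veroHom_X, monomial_pow, one_pow]
      simp only [red, hs, if_false]
      rw [h, map_mul, map_pow, map_pow, map_pow, map_pow, ← sq_mk, ← pow_mul, ← pow_add,
        Nat.div_add_mod]

lemma keyv_eq {u v : Sym2 (Fin n) →₀ ℕ} (h : keyv n u = keyv n v) :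
    Ideal.Quotient.mk (Jideal n k) (monomial u 1) =
      Ideal.Quotient.mk (Jideal n k) (monomial v 1) := by
  have hred : red n u = red n v := by
    funext s
    unfold red
    split_ifs with hs
    · rfl
    · have := keyv_fst n u s hs
      rw [h, keyv_fst n v s hs] at this
      exact ((ZMod.natCast_eq_natCast_iff _ _ _).1 this).symm
  choose m hm hm' using red_exists n k u
  choose p hp hp' using red_exists n k v
  have hsum : ∑ s, m s = ∑ s, p s := by
    have h2 := congrArg Prod.snd h
    simp only [keyv, hm, hp, Finset.sum_add_distrib, hred] at h2
    have h3 := add_right_cancel h2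
    rw [← Finset.smul_sum, ← Finset.smul_sum] at h3
    ext i
    have := DFunLike.congr_fun h3 i
    simpa using this
  have hprod : ∀ q : Sym2 (Fin n) → (Fin n →₀ ℕ),
      ∏ s, monomial (q s) (1 : k) = monomial (∑ s, q s) 1 := fun q => by
    rw [monomial_sum_one]
  rw [monomial_eq_prod, monomial_eq_prod, map_prod, map_prod]
  simp only [hm', hp']
  rw [← map_prod, ← map_prod, Finset.prod_mul_distrib, Finset.prod_mul_distrib, ← map_prod,
    ← map_prod, hprod, hprod, hsum, hred]

lemma ker_le_J (f : R n k) (hf : Phi n k f = 0) : f ∈ Jideal n k := by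
  classical
  let Ψ : Tgt n k → R n k ⧸ Jideal n k := fun F => ∑ w, 
    (basisMonomials (Fin n) k).constr k (fun b => Ideal.Quotient.mk (Jideal n k)
      (monomial (Function.invFun (keyv n) (w, b)) 1)) (F.coeff w)
  have hadd : ∀ F G, Ψ (F + G) = Ψ F + Ψ G := fun F G => by
    simp [Ψ, Finset.sum_add_distrib]
  have hsmul : ∀ (a : k) F, Ψ (a • F) = a • Ψ F := fun a F => by
    simp [Ψ, Finset.smul_sum]
  have hmon : ∀ u, Ψ (Phi n k (monomial u 1)) =
      Ideal.Quotient.mk (Jideal n k) (monomial u 1) := fun u => by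
    rw [Phi_monomial]
    simp only [Ψ]
    rw [Finset.sum_eq_single (keyv n u).1]
    · rw [AddMonoidAlgebra.coeff_single, Finsupp.single_eq_same,
        show monomial (keyv n u).2 (1 : k) = basisMonomials (Fin n) k (keyv n u).2 by simp,
        Module.Basis.constr_basis]
      exact keyv_eq n k (Function.invFun_eq ⟨u, rfl⟩)
    · intro w _ hw
      rw [AddMonoidAlgebra.coeff_single, Finsupp.single_eq_of_ne hw, map_zero]
    · simp
  have hall : ∀ f, Ψ (Phi n k f) = Ideal.Quotient.mk (Jideal n k) f := fun f => by
    induction f using MvPolynomial.induction_on' with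
    | monomial u a =>
      have : monomial u a = a • (monomial u 1 : R n k) := by simp [smul_monomial]
      rw [this, map_smul, hsmul, hmon]
      exact (map_smul (Ideal.Quotient.mkₐ k (Jideal n k)) a _).symm
    | add p q hp hq => rw [map_add, hadd, hp, hq, map_add]
  have := hall f
  rw [hf] at this
  rw [← Ideal.Quotient.eq_zero_iff_mem, ← this]
  simp [Ψ]

lemma torsion (h : MvPolynomial (Fin n) k) (hh : h ≠ 0) (f : R n k)
    (hf : f * dlt n k h ∈ Jideal n k) : f ∈ Jideal n k := by
  apply ker_le_J
  have h1 : Phi n k (f * dlt n k h) = 0 := J_le_ker n k hf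
  rw [map_mul, Phi_dlt, mul_comm, ← Algebra.smul_def] at h1
  have h2 : expand 2 h ≠ 0 := by
    rwa [Ne, map_eq_zero_iff _ (expand_injective (by norm_num : 0 < 2) )]
  ext1
  ext1 w
  have h3 := congrArg (fun F => F.coeff w) h1
  simpa [h2] using h3

/-- If `char k = 2` then `J_n` is primary with radical `I_n`. -/
theorem principal_minor_ideal_primary_char_two (n : ℕ) (hn : 2 ≤ n)
    (k : Type*) [Field k] [CharP k 2] :
    (Jideal n k).IsPrimary ∧ (Jideal n k).radical = Iideal n k := by
  have hrad : ∀ f, f ∈ Iideal n k → f ^ 2 ∈ Jideal n k := by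
    intro f hf
    have hf' : veroHom n k f = 0 := hf
    rw [← Ideal.Quotient.eq_zero_iff_mem, sq_eq, hf']
    simp
  have hJI : Jideal n k ≤ Iideal n k := by
    rw [Jideal, Ideal.span_le]
    rintro f ⟨i, j, _, rfl⟩
    change veroHom n k _ = 0
    simp [veroHom]
    ring
  have hprime : (Iideal n k).IsPrime := RingHom.ker_isPrime _
  have hr : (Jideal n k).radical = Iideal n k := by
    apply le_antisymm
    · exact hprime.radical_le_iff.2 hJI
    · exact fun f hf => ⟨2, hrad f hf⟩
  refine ⟨Ideal.isPrimary_iff.2 ⟨fun h => hprime.ne_top (top_le_iff.1 (h ▸ hJI)), ?_⟩, hr⟩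
  intro f g hfg
  rw [hr]
  by_contra! hcon
  obtain ⟨hf, hg⟩ := hcon
  apply hf
  apply torsion n k (map (frobenius k 2) (veroHom n k g))
  · intro h0
    apply hg
    rw [map_eq_zero_iff _ (map_injective _ (frobenius_inj k 2))] at h0
    exact h0
  · rw [← Ideal.Quotient.eq_zero_iff_mem, map_mul, ← sq_eq, ← map_mul,
      Ideal.Quotient.eq_zero_iff_mem, sq, ← mul_assoc]
    exact Ideal.mul_mem_right _ _ hfg

end Veronese
end

section
/- Let n ≥ 3 be odd and char k ≠ 2, and let φ_1, …, φ_N (N = 2^{c_{n−1}}) be ℤ₂-twistings such that the φ_i(I_n) are pairwise distinct and J_n = ∩_{i=1}^N φ_i(I_n). Then for every l ∈ {1,…,N}: ∩_{i ≠ l} φ_i(I_n) = J_n + ⟨ φ_l(p^+_{n,1}), …, φ_l(p^+_{n,n}) ⟩. Moreover each p^+_{n,j} is V_n-homogeneous of V_n-degree (n−2,…,n−2) + e_j and of total degree (n−1)²/2. -/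
open scoped BigOperators

namespace Veronese

open MvPolynomial

variable (n : ℕ)

variable (k : Type*) [Field k]

section Aux

/-- Exponent evaluation of a sign function. -/
noncomputable def chi {n : ℕ} {k : Type*} [Field k] (θ : Sym2 (Fin n) → k)
    (u : Sym2 (Fin n) →₀ ℕ) : k := ∏ s, θ s ^ u s

/-- Rescaling of the variables. -/
noncomputable def tw {n : ℕ} {k : Type*} [Field k] (θ : Sym2 (Fin n) → k) : R n k →ₐ[k] R n k :=
  aeval fun s => C (θ s) * X s

/-- The twisted parametrization. -/
noncomputable def psi {n : ℕ} {k : Type*} [Field k] (θ : Sym2 (Fin n) → k) :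
    R n k →ₐ[k] MvPolynomial (Fin n) k := (veroHom n k).comp (tw θ)

/-- The coefficient functional of the twisted parametrization. -/
noncomputable def Lam {n : ℕ} {k : Type*} [Field k] (θ : Sym2 (Fin n) → k) (b : Fin n → ℕ)
    (f : R n k) : k := coeff (Finsupp.equivFunOnFinite.symm b) (psi θ f)

/-- A function with values in signs. -/
def IsSgn {n : ℕ} {k : Type*} [Field k] (θ : Sym2 (Fin n) → k) : Prop :=
  ∀ s, θ s = 1 ∨ θ s = -1

/-- Constant on the diagonal. -/
def DiagC {n : ℕ} {k : Type*} [Field k] (θ : Sym2 (Fin n) → k) : Prop :=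
  ∀ a b : Fin n, θ s(a, a) = θ s(b, b)

/-- Twisted Veronese ideal. -/
noncomputable def PP {n : ℕ} {k : Type*} [Field k] (θ : Sym2 (Fin n) → k) : Ideal (R n k) :=
  RingHom.ker (psi θ)

variable {n : ℕ} {k : Type*} [Field k]

lemma VN_add (u v : Sym2 (Fin n) →₀ ℕ) : VN n (u + v) = VN n u + VN n v := by
  funext i; simp [VN, add_mul, Finset.sum_add_distrib]

lemma VN_single (s : Sym2 (Fin n)) (m : ℕ) (i : Fin n) :
    VN n (Finsupp.single s m) i = m * wtN n s i := by
  classical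
  simp only [VN]
  rw [Finset.sum_eq_single s]
  · simp
  · intro t _ ht
    simp [Finsupp.single_apply, Ne.symm ht]
  · simp

lemma chi_add (θ : Sym2 (Fin n) → k) (u v : Sym2 (Fin n) →₀ ℕ) :
    chi θ (u + v) = chi θ u * chi θ v := by
  simp [chi, pow_add, Finset.prod_mul_distrib]

lemma chi_mul (θ η : Sym2 (Fin n) → k) (u : Sym2 (Fin n) →₀ ℕ) :
    chi (θ * η) u = chi θ u * chi η u := by
  simp [chi, mul_pow, Finset.prod_mul_distrib]

lemma chi_single (θ : Sym2 (Fin n) → k) (s : Sym2 (Fin n)) (m : ℕ) :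
    chi θ (Finsupp.single s m) = θ s ^ m := by
  classical
  simp only [chi]
  rw [Finset.prod_eq_single s]
  · simp
  · intro t _ ht
    simp [Finsupp.single_apply, Ne.symm ht]
  · simp

lemma IsSgn.mul {θ η : Sym2 (Fin n) → k} (h : IsSgn θ) (h' : IsSgn η) : IsSgn (θ * η) := by
  intro s
  rcases h s with h | h <;> rcases h' s with h' | h' <;> simp [h, h']

lemma IsSgn.sq {θ : Sym2 (Fin n) → k} (h : IsSgn θ) (s) : θ s * θ s = 1 := by
  rcases h s with h | h <;> simp [h]

lemma IsSgn.mul_self {θ : Sym2 (Fin n) → k} (h : IsSgn θ) : θ * θ = 1 := funext h.sq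

lemma chi_one (u : Sym2 (Fin n) →₀ ℕ) : chi (1 : Sym2 (Fin n) → k) u = 1 := by simp [chi]

lemma IsSgn.chi_sq {θ : Sym2 (Fin n) → k} (h : IsSgn θ) (u) : chi θ u * chi θ u = 1 := by
  rw [← chi_mul, h.mul_self, chi_one]

lemma DiagC.mul {θ η : Sym2 (Fin n) → k} (h : DiagC θ) (h' : DiagC η) : DiagC (θ * η) := by
  intro a b; simp [h a b, h' a b]

lemma tw_monomial (θ : Sym2 (Fin n) → k) (u : Sym2 (Fin n) →₀ ℕ) (a : k) :
    tw θ (monomial u a) = monomial u (a * chi θ u) := by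
  rw [tw, aeval_monomial, Finsupp.prod_fintype _ _ (by simp)]
  simp only [mul_pow, Finset.prod_mul_distrib]
  rw [monomial_eq, Finsupp.prod_fintype _ _ (by simp)]
  simp [chi, algebraMap_eq, mul_assoc]

lemma vero_monomial (u : Sym2 (Fin n) →₀ ℕ) (a : k) :
    veroHom n k (monomial u a) = monomial (Finsupp.equivFunOnFinite.symm (VN n u)) a := by
  rw [veroHom, aeval_monomial, Finsupp.prod_fintype _ _ (by simp)]
  have key : ∀ s : Sym2 (Fin n), (Sym2.lift ⟨fun a b => (X a * X b : MvPolynomial (Fin n) k),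
      fun a b => mul_comm _ _⟩ s) = ∏ i, X i ^ wtN n s i := by
    intro s
    induction s using Sym2.ind with
    | _ p q =>
      simp only [wtN, Sym2.lift_mk, pow_add, Finset.prod_mul_distrib, pow_ite, pow_one, pow_zero]
      rw [Finset.prod_ite_eq', Finset.prod_ite_eq']
      simp
  simp only [key]
  rw [monomial_eq, Finsupp.prod_fintype _ _ (by simp)]
  simp only [algebraMap_eq, ← Finset.prod_pow]
  rw [Finset.prod_comm]
  congr 1
  refine Finset.prod_congr rfl fun i _ => ?_
  simp [VN, ← pow_mul, Finset.prod_pow_eq_pow_sum, mul_comm]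

lemma Lam_monomial (θ : Sym2 (Fin n) → k) (b : Fin n → ℕ) (u : Sym2 (Fin n) →₀ ℕ) (a : k) :
    Lam θ b (monomial u a) = if VN n u = b then a * chi θ u else 0 := by
  classical
  simp only [Lam, psi, AlgHom.comp_apply, tw_monomial, vero_monomial, coeff_monomial,
    EmbeddingLike.apply_eq_iff_eq]

lemma Lam_sum {ι' : Type*} (θ : Sym2 (Fin n) → k) (b : Fin n → ℕ) (s : Finset ι')
    (g : ι' → R n k) : Lam θ b (∑ i ∈ s, g i) = ∑ i ∈ s, Lam θ b (g i) := by
  simp [Lam, map_sum, coeff_sum]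

lemma Lam_sub (θ : Sym2 (Fin n) → k) (b : Fin n → ℕ) (f g : R n k) :
    Lam θ b (f - g) = Lam θ b f - Lam θ b g := by
  simp [Lam]

lemma Lam_C_mul (θ : Sym2 (Fin n) → k) (b : Fin n → ℕ) (a : k) (g : R n k) :
    Lam θ b (C a * g) = a * Lam θ b g := by
  have : psi θ (C a) = C a := (psi θ).commutes a
  simp [Lam, this, coeff_C_mul]

lemma Lam_eq (θ : Sym2 (Fin n) → k) (b : Fin n → ℕ) (f : R n k) :
    Lam θ b f = ∑ u ∈ f.support, if VN n u = b then coeff u f * chi θ u else 0 := by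
  conv_lhs => rw [← support_sum_monomial_coeff f]
  rw [Lam_sum]
  exact Finset.sum_congr rfl fun u _ => Lam_monomial _ _ _ _

lemma mem_PP (θ : Sym2 (Fin n) → k) (f : R n k) : f ∈ PP θ ↔ ∀ b, Lam θ b f = 0 := by
  rw [PP, RingHom.mem_ker]
  constructor
  · intro h b; simp [Lam, h]
  · intro h
    ext m
    have := h (Finsupp.equivFunOnFinite m)
    simpa [Lam] using this

instance PP_prime (θ : Sym2 (Fin n) → k) : (PP θ).IsPrime := RingHom.ker_isPrime _

lemma tw_tw {θ : Sym2 (Fin n) → k} (h : IsSgn θ) (f : R n k) : tw θ (tw θ f) = f := by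
  have : (tw θ).comp (tw θ) = AlgHom.id k _ := by
    apply MvPolynomial.algHom_ext
    intro s
    have : (tw θ) (C (θ s)) = C (θ s) := (tw θ).commutes _
    have h2 : tw θ (X s) = C (θ s) * X s := by simp [tw]
    simp only [AlgHom.comp_apply, h2, map_mul, this, AlgHom.id_apply]
    rw [← mul_assoc, ← C_mul, h.sq, C_1, one_mul]
  exact DFunLike.congr_fun this f

lemma exists_sgn (φ : R n k ≃ₐ[k] R n k) (h : IsTwisting n k φ) :
    ∃ θ : Sym2 (Fin n) → k, IsSgn θ ∧ (∀ f, φ f = tw θ f) ∧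
      Ideal.map φ.toAlgHom (Iideal n k) = PP θ := by
  have : ∀ s, ∃ a : k, (a = 1 ∨ a = -1) ∧ φ (X s) = C a * X s := by
    intro s
    rcases h s with h | h
    · exact ⟨1, Or.inl rfl, by simp [h]⟩
    · exact ⟨-1, Or.inr rfl, by simp [h]⟩
  choose θ hθ hθ' using this
  have hf : ∀ f, φ f = tw θ f := by
    intro f
    have : φ.toAlgHom = tw θ := by
      apply MvPolynomial.algHom_ext
      intro s
      simp [tw, hθ']
    exact DFunLike.congr_fun this f
  refine ⟨θ, hθ, hf, ?_⟩
  ext f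
  rw [Ideal.mem_map_iff_of_surjective φ.toAlgHom φ.surjective]
  constructor
  · rintro ⟨g, hg, rfl⟩
    change psi θ (φ g) = 0
    rw [hf, psi, AlgHom.comp_apply, tw_tw hθ]
    exact hg
  · intro h
    refine ⟨tw θ f, h, ?_⟩
    change φ _ = f
    rw [hf, tw_tw hθ]

lemma J_le_PP {θ : Sym2 (Fin n) → k} (h : IsSgn θ) (hd : DiagC θ) : Jideal n k ≤ PP θ := by
  rw [Jideal, Ideal.span_le]
  rintro _ ⟨i, j, -, rfl⟩
  change psi θ _ = 0
  have h3 : psi θ (X s(i,i) * X s(j,j) - X s(i,j)^2) =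
      (C (θ s(i,i) * θ s(j,j)) - C (θ s(i,j) * θ s(i,j))) * (X i * X j * (X i * X j)) := by
    simp [psi, tw, veroHom]; ring
  rw [h3, h.sq, hd i j, h.sq]; simp

lemma psi_minor (θ : Sym2 (Fin n) → k) (a b c d : Fin n) (α β : k) :
    psi θ (C α * (X s(a,b) * X s(c,d)) - C β * (X s(a,c) * X s(b,d))) =
      C (α * (θ s(a,b) * θ s(c,d)) - β * (θ s(a,c) * θ s(b,d))) * (X a * X b * (X c * X d)) := by
  simp [psi, tw, veroHom]; ring

lemma psi_minor_zero (θ : Sym2 (Fin n) → k) (a b c d : Fin n) (α β : k)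
    (h : psi θ (C α * (X s(a,b) * X s(c,d)) - C β * (X s(a,c) * X s(b,d))) = 0) :
    α * (θ s(a,b) * θ s(c,d)) - β * (θ s(a,c) * θ s(b,d)) = 0 := by
  rw [psi_minor] at h
  have hX : (X a * X b * (X c * X d) : MvPolynomial (Fin n) k) ≠ 0 :=
    mul_ne_zero (mul_ne_zero (X_ne_zero _) (X_ne_zero _))
      (mul_ne_zero (X_ne_zero _) (X_ne_zero _))
  exact (C_eq_zero).1 ((mul_eq_zero.1 h).resolve_right hX)

lemma diagC_of_le {θ : Sym2 (Fin n) → k} (h : IsSgn θ) (hJ : Jideal n k ≤ PP θ) : DiagC θ := by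
  have key : ∀ i j : Fin n, i < j → θ s(i,i) = θ s(j,j) := by
    intro i j hij
    have hm : (X s(i,i) * X s(j,j) - X s(i,j)^2 : R n k) ∈ PP θ :=
      hJ (Ideal.subset_span ⟨i, j, hij, rfl⟩)
    have : psi θ (C 1 * (X s(i,i) * X s(j,j)) - C 1 * (X s(i,j) * X s(i,j))) = 0 := by
      rw [C_1, one_mul, one_mul, ← pow_two]; exact hm
    have h4 := psi_minor_zero _ _ _ _ _ _ _ this
    rw [h.sq] at h4
    have h5 := h.sq s(j,j)
    have : θ s(i,i) = θ s(i,i) * θ s(j,j) * θ s(j,j) := by rw [mul_assoc, h5, mul_one]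
    rw [this]; linear_combination θ s(j,j) * h4
  intro a b
  rcases lt_trichotomy a b with h | h | h
  · exact key _ _ h
  · rw [h]
  · exact (key _ _ h).symm

/-- the star at `i`. -/
def star (i : Fin n) : Finset (Sym2 (Fin n)) := (Finset.univ.erase i).image fun m => s(i, m)

lemma star_card (i : Fin n) : (star i).card = n - 1 := by
  rw [star, Finset.card_image_of_injective]
  · simp [Finset.card_erase_of_mem]
  · intro a b h; simp at h; grind

lemma mem_star {i : Fin n} {s} : s ∈ star i ↔ ∃ m, m ≠ i ∧ s(i, m) = s := by simp [star]

lemma VN_star (u : Sym2 (Fin n) →₀ ℕ) (i : Fin n) :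
    VN n u i = 2 * u s(i,i) + ∑ s ∈ star i, u s := by
  classical
  have hni : s(i,i) ∉ star i := by
    rw [mem_star]; rintro ⟨m, hm, h⟩; simp at h; exact hm h
  have : ∑ s ∈ insert s(i,i) (star i), u s * wtN n s i = VN n u i := by
    apply Finset.sum_subset (Finset.subset_univ _)
    intro s _ hs
    induction s using Sym2.ind with
    | _ p q =>
      have h1 : i ≠ p := by
        rintro rfl
        apply hs
        by_cases hq : q = i
        · subst hq; simp
        · exact Finset.mem_insert_of_mem (mem_star.2 ⟨q, hq, rfl⟩)
      have h2 : i ≠ q := by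
        rintro rfl
        apply hs
        exact Finset.mem_insert_of_mem (mem_star.2 ⟨p, h1.symm, Sym2.eq_swap⟩)
      simp [wtN, h1, h2]
  rw [← this, Finset.sum_insert hni]
  congr 1
  · simp [wtN, mul_comm]
  · refine Finset.sum_congr rfl fun s hs => ?_
    obtain ⟨m, hm, rfl⟩ := mem_star.1 hs
    simp [wtN, hm.symm]

lemma sum_VN (u : Sym2 (Fin n) →₀ ℕ) : ∑ i, VN n u i = 2 * ∑ s, u s := by
  simp only [VN]
  rw [Finset.sum_comm, Finset.mul_sum]
  refine Finset.sum_congr rfl fun s _ => ?_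
  rw [← Finset.mul_sum, mul_comm]
  congr 1
  induction s using Sym2.ind with
  | _ p q => simp [wtN, Finset.sum_add_distrib]

end Aux
section Aux2

variable {n : ℕ} {k : Type*} [Field k]

/-- sign function of a finite set. -/
def sg (k : Type*) [Field k] {n : ℕ} (S : Finset (Sym2 (Fin n))) (s : Sym2 (Fin n)) : k :=
  if s ∈ S then -1 else 1

lemma sg_sgn (S : Finset (Sym2 (Fin n))) : IsSgn (sg k S) := by
  intro s; unfold sg; split_ifs <;> simp

lemma chi_sg (S : Finset (Sym2 (Fin n))) (u : Sym2 (Fin n) →₀ ℕ) :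
    chi (sg k S) u = ∏ s ∈ S, (-1 : k) ^ u s := by
  classical
  unfold chi
  symm
  rw [← Finset.prod_subset (Finset.subset_univ S)]
  · exact Finset.prod_congr rfl fun s hs => by simp [sg, hs]
  · intro s _ hs; simp [sg, hs]

lemma neg_ne (hk : (2 : k) ≠ 0) : (-1 : k) ≠ 1 := by
  intro h
  apply hk
  linear_combination -h

/-- the main lower bound. -/
lemma bound_aux (hk : (2 : k) ≠ 0) (θ : Sym2 (Fin n) → k) (i : Fin n) (hn : 3 ≤ n)
    (f : R n k) (b : Fin n → ℕ)
    (h0 : ∀ S ⊆ star i, S ≠ ∅ → S ≠ star i → Lam (θ * sg k S) b f = 0)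
    (hne : Lam θ b f ≠ 0) (A : Finset (Sym2 (Fin n))) (hA : A ⊆ star i)
    (hpar : A.card % 2 = b i % 2) : A.card ≤ b i := by
  classical
  by_contra hlt
  push Not at hlt
  apply hne
  have hst : star i ≠ ∅ := by
    intro h
    have := star_card i
    rw [h] at this
    simp at this; omega
  have e1 : ∑ S ∈ (star i).powerset, (∏ s ∈ S, sg k A s) * Lam (θ * sg k S) b f = 0 := by
    simp only [Lam_eq, Finset.mul_sum]
    rw [Finset.sum_comm]
    apply Finset.sum_eq_zero
    intro u _
    by_cases hu : VN n u = b
    · simp only [hu, if_true]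
      have : ∀ S ∈ (star i).powerset, (∏ s ∈ S, sg k A s) * (coeff u f * chi (θ * sg k S) u) =
          coeff u f * chi θ u * ∏ s ∈ S, (sg k A s * (-1) ^ u s) := by
        intro S _
        rw [chi_mul, chi_sg, Finset.prod_mul_distrib]; ring
      rw [Finset.sum_congr rfl this, ← Finset.mul_sum, ← Finset.prod_one_add]
      have : ∃ s ∈ A, u s = 0 := by
        by_contra hcon
        push Not at hcon
        have h1 : A.card ≤ ∑ s ∈ A, u s := by
          rw [Finset.card_eq_sum_ones]
          exact Finset.sum_le_sum fun s hs => Nat.one_le_iff_ne_zero.2 (hcon s hs)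
        have h2 : ∑ s ∈ A, u s ≤ ∑ s ∈ star i, u s := Finset.sum_le_sum_of_subset hA
        have h3 := VN_star u i
        rw [hu] at h3
        omega
      obtain ⟨s, hs, hus⟩ := this
      rw [Finset.prod_eq_zero (hA hs), mul_zero]
      simp [sg, hs, hus]
    · simp [hu]
  have e2 : ∑ S ∈ (star i).powerset, (∏ s ∈ S, sg k A s) * Lam (θ * sg k S) b f =
      ∑ S ∈ {∅, star i}, (∏ s ∈ S, sg k A s) * Lam (θ * sg k S) b f := by
    symm
    apply Finset.sum_subset
    · intro S hS
      simp at hS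
      rcases hS with rfl | rfl <;> simp
    · intro S hS hS'
      simp at hS hS'
      rw [h0 S hS hS'.1 hS'.2, mul_zero]
  rw [e2, Finset.sum_pair (Ne.symm hst)] at e1
  have e3 : θ * sg k ∅ = θ := by funext s; simp [sg]
  have e4 : ∏ s ∈ star i, sg k A s = (-1) ^ A.card := by
    simp only [sg]
    rw [Finset.prod_ite, Finset.prod_const, Finset.prod_const_one, mul_one,
      Finset.filter_mem_eq_inter, Finset.inter_eq_right.2 hA]
  have e5 : Lam (θ * sg k (star i)) b f = (-1) ^ b i * Lam θ b f := by
    simp only [Lam_eq, Finset.mul_sum]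
    refine Finset.sum_congr rfl fun u _ => ?_
    split_ifs with hu
    · rw [chi_mul, chi_sg, Finset.prod_pow_eq_pow_sum]
      have h3 := VN_star u i
      rw [hu] at h3
      rw [h3, pow_add, pow_mul]
      simp; ring
    · simp
  rw [e3, e4, e5, ← mul_assoc, ← pow_add] at e1
  have : Even (A.card + b i) := by rw [Nat.even_iff]; omega
  rw [this.neg_one_pow] at e1
  simp at e1
  have : (2 : k) * Lam θ b f = 0 := by linear_combination e1
  exact (mul_eq_zero.1 this).resolve_left hk

lemma star_const (hk : (2 : k) ≠ 0) {θ : Sym2 (Fin n) → k} (hθ : IsSgn θ) (i : Fin n)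
    (S : Finset (Sym2 (Fin n))) (hS : S ⊆ star i) (hle : PP θ ≤ PP (θ * sg k S)) :
    S = ∅ ∨ S = star i := by
  classical
  have key : ∀ m m', m ≠ i → m' ≠ i → s(i, m) ∈ S → s(i, m') ∈ S := by
    intro m m' hm hm' hmem
    by_contra hmem'
    have hg : (C (θ s(m,i) * θ s(i,m')) * (X s(m,i) * X s(i,m')) -
        C (θ s(i,i) * θ s(m,m')) * (X s(m,m') * X s(i,i)) : R n k) ∈ PP θ := by
      change psi θ _ = 0
      simp [psi, tw, veroHom]
      have h1 := hθ.sq s(m,i)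
      have h2 := hθ.sq s(i,m')
      have h3 := hθ.sq s(i,i)
      have h4 := hθ.sq s(m,m')
      have e1 := congrArg (C (σ := Fin n)) h1
      have e2 := congrArg (C (σ := Fin n)) h2
      have e3 := congrArg (C (σ := Fin n)) h3
      have e4 := congrArg (C (σ := Fin n)) h4
      simp only [C_mul, C_1] at e1 e2 e3 e4
      linear_combination (X m * X i * X i * X m' : MvPolynomial (Fin n) k) *
        (C (θ s(i,m')) * C (θ s(i,m')) * e1 + e2 - C (θ s(m,m')) * C (θ s(m,m')) * e3 - e4)
    have h2 : psi (θ * sg k S) (C (θ s(m,i) * θ s(i,m')) * (X s(m,i) * X s(i,m')) -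
        C (θ s(i,i) * θ s(m,m')) * (X s(m,m') * X s(i,i))) = 0 := by
      exact hle hg
    have h4 : psi (θ * sg k S) (C (θ s(m,i) * θ s(i,m')) * (X s(m,i) * X s(i,m')) -
        C (θ s(i,i) * θ s(m,m')) * (X s(m,m') * X s(i,i))) =
        C (θ s(m,i) * θ s(i,m') * ((θ * sg k S) s(m,i) * (θ * sg k S) s(i,m')) -
          θ s(i,i) * θ s(m,m') * ((θ * sg k S) s(m,m') * (θ * sg k S) s(i,i))) *
          (X m * X i * (X i * X m')) := by
      simp [psi, tw, veroHom]; ring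
    rw [h4] at h2
    have hX : (X m * X i * (X i * X m') : MvPolynomial (Fin n) k) ≠ 0 :=
      mul_ne_zero (mul_ne_zero (X_ne_zero _) (X_ne_zero _))
        (mul_ne_zero (X_ne_zero _) (X_ne_zero _))
    have h5 := (C_eq_zero).1 ((mul_eq_zero.1 h2).resolve_right hX)
    have g1 : sg k S s(m,i) = -1 := by
      rw [Sym2.eq_swap]; simp [sg, hmem]
    have g2 : sg k S s(i,m') = 1 := by simp [sg, hmem']
    have g3 : sg k S s(i,i) = 1 := by
      have : s(i,i) ∉ S := by
        intro h
        obtain ⟨x, hx, hx'⟩ := mem_star.1 (hS h)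
        simp at hx'; exact hx hx'
      simp [sg, this]
    have g4 : sg k S s(m,m') = 1 := by
      have : s(m,m') ∉ S := by
        intro h
        obtain ⟨x, hx, hx'⟩ := mem_star.1 (hS h)
        simp at hx'; grind
      simp [sg, this]
    simp only [Pi.mul_apply, g1, g2, g3, g4] at h5
    have h1 := hθ.sq s(m,i)
    have h2 := hθ.sq s(i,m')
    have h3 := hθ.sq s(i,i)
    have h4 := hθ.sq s(m,m')
    apply hk
    linear_combination -h5 - (θ s(i,m') * θ s(i,m') * h1 + h2 + θ s(m,m') * θ s(m,m') * h3 + h4)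
  rcases S.eq_empty_or_nonempty with h | ⟨s, hs⟩
  · exact Or.inl h
  · right
    apply Finset.Subset.antisymm hS
    obtain ⟨m, hm, rfl⟩ := mem_star.1 (hS hs)
    intro t ht
    obtain ⟨m', hm', rfl⟩ := mem_star.1 ht
    exact key m m' hm hm' hs

lemma sg_diagC (i : Fin n) (S : Finset (Sym2 (Fin n))) (hS : S ⊆ star i) : DiagC (sg k S) := by
  have : ∀ a : Fin n, sg k S s(a,a) = 1 := by
    intro a
    have : s(a,a) ∉ S := by
      intro h
      obtain ⟨x, hx, hx'⟩ := mem_star.1 (hS h)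
      simp at hx'; grind
    simp [sg, this]
  intro a b; rw [this, this]

lemma exists_VN (N : ℕ) : ∀ c : Fin n → ℕ, ∑ i, c i = 2 * N → ∃ w, VN n w = c := by
  induction N with
  | zero =>
    intro c hc
    refine ⟨0, ?_⟩
    simp at hc
    funext i
    simp [VN, hc i]
  | succ N ih =>
    intro c hc
    have h1 : ∃ a, c a ≠ 0 := by
      by_contra h
      push Not at h
      simp [h] at hc
    obtain ⟨a, ha⟩ := h1
    have hle : Pi.single a 1 ≤ c := by
      intro i
      by_cases hi : i = a
      · subst hi; simp; omega
      · simp [hi]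
    obtain ⟨c', hc'⟩ := exists_add_of_le hle
    have s1 : ∑ i, c' i = 2 * N + 1 := by
      rw [hc'] at hc
      simp [Finset.sum_add_distrib] at hc
      omega
    have h2 : ∃ a, c' a ≠ 0 := by
      by_contra h
      push Not at h
      simp [h] at s1
    obtain ⟨a', ha'⟩ := h2
    have hle : Pi.single a' 1 ≤ c' := by
      intro i
      by_cases hi : i = a'
      · subst hi; simp; omega
      · simp [hi]
    obtain ⟨c'', hc''⟩ := exists_add_of_le hle
    obtain ⟨w, hw⟩ := ih c'' (by
      rw [hc''] at s1
      simp [Finset.sum_add_distrib] at s1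
      omega)
    refine ⟨Finsupp.single s(a,a') 1 + w, ?_⟩
    funext i
    rw [VN_add, hw, hc', hc'']
    simp only [Pi.add_apply, VN_single, wtN, Sym2.lift_mk, Pi.single_apply]
    ring

end Aux2
section Aux3

variable {n : ℕ} {k : Type*} [Field k]

/-- The degree of `p⁺_{n,j}`. -/
def bj (j : Fin n) : Fin n → ℕ := fun i => (n - 2) + if i = j then 1 else 0

/-- Canonical representatives. -/
noncomputable def CC (j : Fin n) : Finset (Sym2 (Fin n) →₀ ℕ) :=
  (fiberFinset n (bj j)).filter (fun u => ∀ s : Sym2 (Fin n), ¬s.IsDiag → u s ≤ 1)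

lemma mem_CC {j : Fin n} {u} :
    u ∈ CC j ↔ VN n u = bj j ∧ ∀ s : Sym2 (Fin n), ¬s.IsDiag → u s ≤ 1 := by
  simp [CC, fiberFinset, fiber]

lemma pplusOdd_eq (j : Fin n) : pplusOdd n k j = ∑ u ∈ CC j, monomial u (1 : k) := rfl

lemma star_not_diag {i : Fin n} {s} (h : s ∈ star i) : ¬ s.IsDiag := by
  obtain ⟨m, hm, rfl⟩ := mem_star.1 h
  simp [Ne.symm hm]

/-- Toggle a triangle. -/
noncomputable def tog (a b c : Fin n) (u : Sym2 (Fin n) →₀ ℕ) : Sym2 (Fin n) →₀ ℕ :=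
  Finsupp.equivFunOnFinite.symm fun s =>
    if s = s(a,b) then 1 - u s(a,b) else if s = s(b,c) then 1 - u s(b,c)
    else if s = s(a,c) then 1 - u s(a,c)
    else if s = s(a,a) then u s(a,a) + u s(a,b) + u s(a,c) - 1
    else if s = s(b,b) then u s(b,b) + u s(a,b) + u s(b,c) - 1
    else if s = s(c,c) then u s(c,c) + u s(a,c) + u s(b,c) - 1
    else u s

lemma CC_pos {j : Fin n} (hn : 3 ≤ n) {u} (hu : u ∈ CC j) {a b c : Fin n} (hab : a ≠ b)
    (hbc : b ≠ c) (hac : a ≠ c) : 1 ≤ u s(a,a) + u s(a,b) + u s(a,c) := by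
  classical
  obtain ⟨h1, h2⟩ := mem_CC.1 hu
  by_contra hlt
  have h3 := VN_star u a
  have hsub : ({s(a,b), s(a,c)} : Finset (Sym2 (Fin n))) ⊆ star a := by
    intro s hs
    simp at hs
    rcases hs with rfl | rfl
    · exact mem_star.2 ⟨b, hab.symm, rfl⟩
    · exact mem_star.2 ⟨c, hac.symm, rfl⟩
  have hne : s(a,b) ≠ s(a,c) := by simp; grind
  have h4 := Finset.sum_sdiff (f := fun s => u s) hsub
  rw [Finset.sum_pair hne] at h4
  have h5 : ∑ s ∈ star a \ {s(a,b), s(a,c)}, u s ≤ (star a \ {s(a,b), s(a,c)}).card := by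
    rw [Finset.card_eq_sum_ones]
    exact Finset.sum_le_sum fun s hs => h2 s (star_not_diag (Finset.mem_sdiff.1 hs).1)
  rw [Finset.card_sdiff_of_subset hsub, Finset.card_pair hne, star_card] at h5
  have h6 : n - 2 ≤ VN n u a := by rw [h1]; simp [bj]
  omega

section
variable {a b c : Fin n} (hab : a ≠ b) (hbc : b ≠ c) (hac : a ≠ c)

lemma tog_ab (u : Sym2 (Fin n) →₀ ℕ) : tog a b c u s(a,b) = 1 - u s(a,b) := by simp [tog]

lemma tog_spec (hab : a ≠ b) (hbc : b ≠ c) (hac : a ≠ c) (u : Sym2 (Fin n) →₀ ℕ) :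
    tog a b c u s(a,b) = 1 - u s(a,b) ∧ tog a b c u s(b,c) = 1 - u s(b,c) ∧
    tog a b c u s(a,c) = 1 - u s(a,c) ∧
    tog a b c u s(a,a) = u s(a,a) + u s(a,b) + u s(a,c) - 1 ∧
    tog a b c u s(b,b) = u s(b,b) + u s(a,b) + u s(b,c) - 1 ∧
    tog a b c u s(c,c) = u s(c,c) + u s(a,c) + u s(b,c) - 1 ∧
    ∀ s, s ≠ s(a,b) → s ≠ s(b,c) → s ≠ s(a,c) → s ≠ s(a,a) → s ≠ s(b,b) → s ≠ s(c,c) →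
      tog a b c u s = u s := by
  simp only [tog, Finsupp.equivFunOnFinite_symm_apply_apply]
  refine ⟨by simp, ?_, ?_, ?_, ?_, ?_, ?_⟩
  · simp [hab.symm, hac.symm]
  · simp [hab, hbc.symm, hac, hac.symm, hab.symm, hbc]
  · simp [hab, hac]
  · simp [hab.symm, hbc]
  · simp [hac.symm, hbc.symm]
  · intro s h1 h2 h3 h4 h5 h6
    simp [h1, h2, h3, h4, h5, h6]

/-- All six pairs or another one. -/
lemma six (a b c : Fin n) (s : Sym2 (Fin n)) :
    s = s(a,b) ∨ s = s(b,c) ∨ s = s(a,c) ∨ s = s(a,a) ∨ s = s(b,b) ∨ s = s(c,c) ∨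
    (s ≠ s(a,b) ∧ s ≠ s(b,c) ∧ s ≠ s(a,c) ∧ s ≠ s(a,a) ∧ s ≠ s(b,b) ∧ s ≠ s(c,c)) := by tauto

lemma tog_eq {j : Fin n} (hn : 3 ≤ n) {u} (hu : u ∈ CC j) (hab : a ≠ b)
    (hbc : b ≠ c) (hac : a ≠ c) :
    tog a b c u + (Finsupp.single s(a,b) (2 * u s(a,b)) + Finsupp.single s(b,c) (2 * u s(b,c))
      + Finsupp.single s(a,c) (2 * u s(a,c)) + Finsupp.single s(a,a) 1
      + Finsupp.single s(b,b) 1 + Finsupp.single s(c,c) 1) =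
    u + (Finsupp.single s(a,b) 1 + Finsupp.single s(b,c) 1 + Finsupp.single s(a,c) 1
      + Finsupp.single s(a,a) (u s(a,b) + u s(a,c)) + Finsupp.single s(b,b) (u s(a,b) + u s(b,c))
      + Finsupp.single s(c,c) (u s(a,c) + u s(b,c))) := by
  classical
  obtain ⟨t1, t2, t3, t4, t5, t6, t7⟩ := tog_spec hab hbc hac u
  have p1 := CC_pos hn hu hab hbc hac
  have p2 := CC_pos hn hu hab.symm hac hbc
  have p3 := CC_pos hn hu hac.symm hab hbc.symm
  rw [Sym2.eq_swap (a := b) (b := a)] at p2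
  rw [Sym2.eq_swap (a := c) (b := a), Sym2.eq_swap (a := c) (b := b)] at p3
  have q := (mem_CC.1 hu).2
  have q1 := q s(a,b) (by simpa using hab)
  have q2 := q s(b,c) (by simpa using hbc)
  have q3 := q s(a,c) (by simpa using hac)
  ext s
  simp only [Finsupp.add_apply, Finsupp.single_apply]
  rcases six a b c s with rfl | rfl | rfl | rfl | rfl | rfl | ⟨h1, h2, h3, h4, h5, h6⟩
  · rw [t1]; simp [hab, hbc, hac, hab.symm, hbc.symm, hac.symm]; omega
  · rw [t2]; simp [hab, hbc, hac, hab.symm, hbc.symm, hac.symm]; omega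
  · rw [t3]; simp [hab, hbc, hac, hab.symm, hbc.symm, hac.symm]; omega
  · rw [t4]; simp [hab, hbc, hac, hab.symm, hbc.symm, hac.symm]; omega
  · rw [t5]; simp [hab, hbc, hac, hab.symm, hbc.symm, hac.symm]; omega
  · rw [t6]; simp [hab, hbc, hac, hab.symm, hbc.symm, hac.symm]; omega
  · rw [t7 s h1 h2 h3 h4 h5 h6]
    simp [h1.symm, h2.symm, h3.symm, h4.symm, h5.symm, h6.symm]

lemma tog_mem {j : Fin n} (hn : 3 ≤ n) {u} (hu : u ∈ CC j) (hab : a ≠ b)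
    (hbc : b ≠ c) (hac : a ≠ c) : tog a b c u ∈ CC j := by
  have he := tog_eq hn hu hab hbc hac
  obtain ⟨t1, t2, t3, t4, t5, t6, t7⟩ := tog_spec hab hbc hac u
  rw [mem_CC]
  have hu' := mem_CC.1 hu
  constructor
  · rw [← hu'.1]
    funext i
    have := congrFun (congrArg (VN n) he) i
    simp only [VN_add, Pi.add_apply, VN_single, wtN, Sym2.lift_mk] at this
    generalize (if i = a then 1 else 0 : ℕ) = A at this
    generalize (if i = b then 1 else 0 : ℕ) = B at this
    generalize (if i = c then 1 else 0 : ℕ) = D at this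
    nlinarith
  · intro s hs
    rcases six a b c s with rfl | rfl | rfl | rfl | rfl | rfl | ⟨h1, h2, h3, h4, h5, h6⟩
    · omega
    · omega
    · omega
    · simp at hs
    · simp at hs
    · simp at hs
    · rw [t7 s h1 h2 h3 h4 h5 h6]; exact hu'.2 s hs

lemma tog_tog {j : Fin n} (hn : 3 ≤ n) {u} (hu : u ∈ CC j) (hab : a ≠ b)
    (hbc : b ≠ c) (hac : a ≠ c) : tog a b c (tog a b c u) = u := by
  obtain ⟨t1, t2, t3, t4, t5, t6, t7⟩ := tog_spec hab hbc hac u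
  obtain ⟨r1, r2, r3, r4, r5, r6, r7⟩ := tog_spec hab hbc hac (tog a b c u)
  have p1 := CC_pos hn hu hab hbc hac
  have p2 := CC_pos hn hu hab.symm hac hbc
  have p3 := CC_pos hn hu hac.symm hab hbc.symm
  rw [Sym2.eq_swap (a := b) (b := a)] at p2
  rw [Sym2.eq_swap (a := c) (b := a), Sym2.eq_swap (a := c) (b := b)] at p3
  have q := (mem_CC.1 hu).2
  have q1 := q s(a,b) (by simpa using hab)
  have q2 := q s(b,c) (by simpa using hbc)
  have q3 := q s(a,c) (by simpa using hac)
  ext s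
  rcases six a b c s with rfl | rfl | rfl | rfl | rfl | rfl | ⟨h1, h2, h3, h4, h5, h6⟩
  · rw [r1, t1]; clear * - q1; omega
  · rw [r2, t2]; clear * - q2; omega
  · rw [r3, t3]; clear * - q3; omega
  · rw [r4, t4, t1, t3]; clear * - q1 q3 p1; omega
  · rw [r5, t5, t1, t2]; clear * - q1 q2 p2; omega
  · rw [r6, t6, t3, t2]; clear * - q3 q2 p3; omega
  · rw [r7 s h1 h2 h3 h4 h5 h6, t7 s h1 h2 h3 h4 h5 h6]

lemma IsSgn.pow_even {θ : Sym2 (Fin n) → k} (h : IsSgn θ) (s) (m : ℕ) : θ s ^ (2 * m) = 1 := by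
  rw [pow_mul, pow_two, h.sq, one_pow]

lemma chi_tog {θ : Sym2 (Fin n) → k} (h : IsSgn θ) (hd : DiagC θ) {j : Fin n} (hn : 3 ≤ n) {u}
    (hu : u ∈ CC j) (hab : a ≠ b) (hbc : b ≠ c) (hac : a ≠ c) :
    chi θ (tog a b c u) = θ s(a,a) * (θ s(a,b) * θ s(b,c) * θ s(a,c)) * chi θ u := by
  have he := congrArg (chi θ) (tog_eq hn hu hab hbc hac)
  simp only [chi_add, chi_single, h.pow_even, pow_one, hd b a, hd c a, one_mul] at he
  have h2 : θ s(a,a) ^ (u s(a,b) + u s(a,c)) * θ s(a,a) ^ (u s(a,b) + u s(b,c)) *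
      θ s(a,a) ^ (u s(a,c) + u s(b,c)) = 1 := by
    rw [← pow_add, ← pow_add]
    convert h.pow_even s(a,a) (u s(a,b) + u s(a,c) + u s(b,c)) using 2
    ring
  have h3 := h.sq s(a,a)
  generalize chi θ (tog a b c u) = x at *
  generalize θ s(a,a) ^ (u s(a,b) + u s(a,c)) = y1 at *
  generalize θ s(a,a) ^ (u s(a,b) + u s(b,c)) = y2 at *
  generalize θ s(a,a) ^ (u s(a,c) + u s(b,c)) = y3 at *
  generalize θ s(a,a) = t at *
  linear_combination t * he - x * (t * t + 1) * h3 +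
    t * chi θ u * θ s(a,b) * θ s(b,c) * θ s(a,c) * h2

lemma tri {θ : Sym2 (Fin n) → k} (h : IsSgn θ) (hd : DiagC θ) {j : Fin n} (hn : 3 ≤ n)
    (hne : ∑ u ∈ CC j, chi θ u ≠ 0) (hab : a ≠ b) (hbc : b ≠ c) (hac : a ≠ c) :
    θ s(a,a) * (θ s(a,b) * θ s(b,c) * θ s(a,c)) = 1 := by
  have : ∑ u ∈ CC j, chi θ u = ∑ u ∈ CC j, chi θ (tog a b c u) :=
    Finset.sum_nbij' (tog a b c) (tog a b c) (fun u hu => tog_mem hn hu hab hbc hac)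
      (fun u hu => tog_mem hn hu hab hbc hac) (fun u hu => tog_tog hn hu hab hbc hac)
      (fun u hu => tog_tog hn hu hab hbc hac)
      (fun u hu => by rw [tog_tog hn hu hab hbc hac])
  rw [Finset.sum_congr rfl (fun u hu => chi_tog h hd hn hu hab hbc hac), ← Finset.mul_sum] at this
  apply mul_right_cancel₀ hne
  rw [one_mul]; exact this.symm
end

lemma chi_const {θ : Sym2 (Fin n) → k} (h : IsSgn θ) (hd : DiagC θ) {j : Fin n} (hn : 3 ≤ n)
    (hne : ∑ u ∈ CC j, chi θ u ≠ 0) {u v : Sym2 (Fin n) →₀ ℕ} (huv : VN n u = VN n v) :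
    chi θ u = chi θ v := by
  have key : ∀ a b : Fin n, θ s(a,b) = θ s(j,j) * (θ s(j,a) * θ s(j,b)) := by
    intro a b
    have hj := h.sq s(j,j)
    by_cases hja : j = a
    · subst hja
      rw [← mul_assoc, hj, one_mul]
    by_cases hjb : j = b
    · subst hjb
      rw [Sym2.eq_swap (a := a)]
      linear_combination -θ s(j,a) * hj
    by_cases hab : a = b
    · subst hab
      rw [h.sq, mul_one, hd a j]
    have ht := tri h hd hn hne hja hab hjb
    have h2 := h.sq s(a,b)
    linear_combination -θ s(a,b) * ht + θ s(j,j) * θ s(j,a) * θ s(j,b) * h2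
  have key2 : ∀ s, θ s = θ s(j,j) * ∏ i, θ s(j,i) ^ wtN n s i := by
    intro s
    induction s using Sym2.ind with
    | _ p q =>
      rw [key p q]
      simp only [wtN, Sym2.lift_mk, pow_add, Finset.prod_mul_distrib, pow_ite, pow_one, pow_zero]
      rw [Finset.prod_ite_eq', Finset.prod_ite_eq']
      simp
  have key3 : ∀ w : Sym2 (Fin n) →₀ ℕ,
      chi θ w = θ s(j,j) ^ (∑ s, w s) * ∏ i, θ s(j,i) ^ VN n w i := by
    intro w
    have : chi θ w = ∏ s, (θ s(j,j) * ∏ i, θ s(j,i) ^ wtN n s i) ^ w s :=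
      Finset.prod_congr rfl fun s _ => by rw [← key2 s]
    rw [this]
    simp only [mul_pow, Finset.prod_mul_distrib, Finset.prod_pow_eq_pow_sum, ← Finset.prod_pow]
    rw [Finset.prod_comm]
    congr 1
    refine Finset.prod_congr rfl fun i _ => ?_
    simp [VN, ← pow_mul, Finset.prod_pow_eq_pow_sum, mul_comm]
  rw [key3, key3, huv]
  have := sum_VN u
  rw [huv, sum_VN] at this
  congr 2
  omega

lemma PP_le_of_const {θ η : Sym2 (Fin n) → k} (hη : IsSgn η)
    (hc : ∀ u v : Sym2 (Fin n) →₀ ℕ, VN n u = VN n v → chi (θ * η) u = chi (θ * η) v) :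
    PP η ≤ PP θ := by
  intro f hf
  rw [mem_PP] at *
  intro b
  by_cases hb : ∃ v, VN n v = b
  · obtain ⟨v, hv⟩ := hb
    have : Lam θ b f = chi (θ * η) v * Lam η b f := by
      rw [Lam_eq, Lam_eq, Finset.mul_sum]
      refine Finset.sum_congr rfl fun u _ => ?_
      split_ifs with hu
      · rw [← hc u v (by rw [hu, hv]), chi_mul]
        linear_combination (-coeff u f * chi θ u) * hη.chi_sq u
      · simp
    rw [this, hf, mul_zero]
  · rw [Lam_eq]
    apply Finset.sum_eq_zero
    intro u _
    rw [if_neg fun h => hb ⟨u, h⟩]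

lemma Lam_p (θ η : Sym2 (Fin n) → k) (hη : IsSgn η) (j : Fin n) (w : Sym2 (Fin n) →₀ ℕ)
    (b : Fin n → ℕ) :
    Lam θ b (monomial w 1 * tw η (pplusOdd n k j)) =
      if VN n w + bj j = b then chi θ w * ∑ u ∈ CC j, chi (θ * η) u else 0 := by
  rw [pplusOdd_eq, map_sum, Finset.mul_sum, Lam_sum]
  have : ∀ u ∈ CC j, Lam θ b (monomial w 1 * tw η (monomial u 1)) =
      if VN n w + bj j = b then chi θ w * chi (θ * η) u else 0 := by
    intro u hu
    rw [tw_monomial, monomial_mul, Lam_monomial, VN_add, (mem_CC.1 hu).1, chi_add, chi_mul]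
    split_ifs
    · ring
    · rfl
  rw [Finset.sum_congr rfl this]
  split_ifs
  · rw [Finset.mul_sum]
  · simp

lemma CC_nonempty (hn : 3 ≤ n) (hodd : Odd n) (j : Fin n) : (CC j).Nonempty := by
  classical
  let u : Sym2 (Fin n) →₀ ℕ := Finsupp.equivFunOnFinite.symm fun s =>
    if s ∈ star j then 1 else if s = s(j,j) then 0 else if s.IsDiag then (n - 3) / 2 else 0
  refine ⟨u, mem_CC.2 ⟨?_, ?_⟩⟩
  · funext i
    rw [VN_star]
    by_cases hi : i = j
    · subst hi
      have h1 : u s(i,i) = 0 := by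
        have : s(i,i) ∉ star i := fun h => star_not_diag h (by simp)
        simp [u, this]
      have h2 : ∑ s ∈ star i, u s = n - 1 := by
        rw [← star_card i, Finset.card_eq_sum_ones]
        exact Finset.sum_congr rfl fun s hs => by simp [u, hs]
      rw [h1, h2]; simp [bj]; omega
    · have h1 : u s(i,i) = (n - 3) / 2 := by
        have : s(i,i) ∉ star j := fun h => star_not_diag h (by simp)
        simp [u, this, hi]
      have h2 : ∑ s ∈ star i, u s = 1 := by
        rw [Finset.sum_eq_single s(i,j)]
        · have : s(i,j) ∈ star j := mem_star.2 ⟨i, hi, Sym2.eq_swap⟩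
          simp [u, this]
        · intro s hs hne
          have hd := star_not_diag hs
          obtain ⟨m, hm, rfl⟩ := mem_star.1 hs
          have h1 : s(i,m) ∉ star j := by
            intro h
            obtain ⟨m', hm', h'⟩ := mem_star.1 h
            simp at h' hne
            grind
          have h2 : s(i,m) ≠ s(j,j) := by simp [hi]
          simp only [u, Finsupp.equivFunOnFinite_symm_apply_apply, h1, h2, hd, if_false]
        · intro h
          exact absurd (mem_star.2 ⟨j, Ne.symm hi, rfl⟩) h
      obtain ⟨m, hm⟩ := hodd
      rw [h1, h2]; simp [bj, hi]; omega
  · intro s hs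
    simp only [u, Finsupp.equivFunOnFinite_symm_apply_apply, hs, if_false]
    split_ifs <;> simp

lemma CC_ext {j : Fin n} {u v} (hu : u ∈ CC j) (hv : v ∈ CC j)
    (h : ∀ s : Sym2 (Fin n), ¬ s.IsDiag → u s = v s) : u = v := by
  have h1 := (mem_CC.1 hu).1
  have h2 := (mem_CC.1 hv).1
  ext s
  by_cases hs : s.IsDiag
  · induction s using Sym2.ind with
    | _ p q =>
      simp at hs
      subst hs
      have e1 := VN_star u p
      have e2 := VN_star v p
      rw [h1] at e1
      have e3 : ∑ s ∈ star p, v s = ∑ s ∈ star p, u s :=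
        Finset.sum_congr rfl (fun s hs => (h s (star_not_diag hs)).symm)
      rw [h2, e3] at e2
      omega
  · exact h s hs

lemma CC_card_ne (hk : (2 : k) ≠ 0) (hn : 3 ≤ n) (hodd : Odd n) (j : Fin n) :
    ((CC j).card : k) ≠ 0 := by
  classical
  intro h0
  obtain ⟨u0, hu0⟩ := CC_nonempty hn hodd j
  let E : Finset (Sym2 (Fin n)) := Finset.univ.filter fun s => ¬ s.IsDiag
  have e1 : ∀ S ∈ E.powerset, ∑ u ∈ CC j, chi (sg k S) (u0 + u) = 0 := by
    intro S hS
    simp only [chi_add, ← Finset.mul_sum]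
    by_contra hne
    have hne' := right_ne_zero_of_mul hne
    have hd : DiagC (sg k S) := by
      have : ∀ a : Fin n, sg k S s(a,a) = 1 := by
        intro a
        have : s(a,a) ∉ S := by
          intro h
          have := Finset.mem_powerset.1 hS h
          simp [E] at this
        simp [sg, this]
      intro a b; rw [this, this]
    apply hne'
    rw [Finset.sum_congr rfl (fun u hu => chi_const (sg_sgn S) hd hn hne'
      ((mem_CC.1 hu).1.trans (mem_CC.1 hu0).1.symm)), Finset.sum_const, nsmul_eq_mul, h0, zero_mul]
  have e2 := Finset.sum_eq_zero e1
  rw [Finset.sum_comm] at e2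
  simp only [chi_sg, ← Finset.prod_one_add] at e2
  rw [Finset.sum_eq_single u0] at e2
  · have : ∀ s ∈ E, (1 + (-1) ^ (u0 + u0) s : k) = 2 := by
      intro s _
      rw [Finsupp.add_apply, ← two_mul, pow_mul]
      norm_num
    rw [Finset.prod_congr rfl this, Finset.prod_const] at e2
    exact hk (eq_zero_of_pow_eq_zero e2)
  · intro u hu hne
    have : ∃ s : Sym2 (Fin n), ¬ s.IsDiag ∧ u s ≠ u0 s := by
      by_contra hcon
      push Not at hcon
      exact hne (CC_ext hu hu0 hcon)
    obtain ⟨s, hs, hus⟩ := this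
    apply Finset.prod_eq_zero (i := s) (by simp [E, hs])
    have a1 := (mem_CC.1 hu).2 s hs
    have a2 := (mem_CC.1 hu0).2 s hs
    have : (u0 + u) s = 1 := by simp; omega
    rw [this]; simp
  · intro h; exact absurd hu0 h

lemma bj_sum (hn : 3 ≤ n) (j : Fin n) : ∑ i, bj j i = (n - 1) ^ 2 := by
  simp [bj, Finset.sum_add_distrib]
  obtain ⟨m, rfl⟩ := Nat.exists_eq_add_of_le hn
  have h1 : 3 + m - 2 = m + 1 := by omega
  have h2 : 3 + m - 1 = m + 2 := by omega
  rw [h1, h2]; ring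

lemma coeff_p (j : Fin n) (u) : coeff u (pplusOdd n k j) = if u ∈ CC j then 1 else 0 := by
  classical
  rw [pplusOdd_eq, coeff_sum]
  simp [coeff_monomial]

lemma second_part (hn : 3 ≤ n) (hodd : Odd n) (j : Fin n) :
    VHomog n k (pplusOdd n k j) (bj j) ∧
      (pplusOdd n k j).totalDegree = (n - 1) ^ 2 / 2 := by
  classical
  have hs : ∀ u ∈ (pplusOdd n k j).support, u ∈ CC j := by
    intro u hu
    rw [mem_support_iff, coeff_p] at hu
    by_contra h
    simp [h] at hu
  refine ⟨fun u hu => (mem_CC.1 (hs u hu)).1, ?_⟩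
  have hdeg : ∀ u ∈ CC j, u.degree = (n - 1) ^ 2 / 2 := by
    intro u hu
    have h1 := sum_VN u
    rw [(mem_CC.1 hu).1, bj_sum hn] at h1
    rw [Finsupp.degree_eq_sum, h1]; omega
  have hh : (pplusOdd n k j).IsHomogeneous ((n - 1) ^ 2 / 2) := by
    rw [pplusOdd_eq]
    exact IsHomogeneous.sum _ _ _ fun u hu => isHomogeneous_monomial _ (hdeg u hu)
  apply hh.totalDegree
  obtain ⟨u, hu⟩ := CC_nonempty hn hodd j
  intro h
  have := coeff_p (k := k) j u
  rw [h] at this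
  simp [hu] at this

end Aux3

/-- For odd `n ≥ 3` and `char k ≠ 2`: omitting one component of the
prime decomposition of `J_n` yields `J_n + ⟨φ_l(p⁺_{n,1}), …, φ_l(p⁺_{n,n})⟩`; each
`p⁺_{n,j}` is `V_n`-homogeneous of `V_n`-degree `(n-2,…,n-2)+e_j` and total degree
`(n-1)²/2`. -/
theorem subintersection_odd (n : ℕ) (hn : 3 ≤ n) (hodd : Odd n)
    (k : Type*) [Field k] (hk : (2 : k) ≠ 0)
    (φ : Fin (2 ^ c (n - 1)) → (R n k ≃ₐ[k] R n k))
    (htw : ∀ i, IsTwisting n k (φ i))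
    (hdist : Function.Injective fun i => Ideal.map (φ i).toAlgHom (Iideal n k))
    (hdec : Jideal n k = ⨅ i, Ideal.map (φ i).toAlgHom (Iideal n k)) :
    (∀ l, (⨅ (i) (_ : i ≠ l), Ideal.map (φ i).toAlgHom (Iideal n k)) =
        Jideal n k +
          Ideal.span (Set.range fun j : Fin n => (φ l) (pplusOdd n k j))) ∧
    ∀ j : Fin n,
      VHomog n k (pplusOdd n k j) (fun i => (n - 2) + if i = j then 1 else 0) ∧
      (pplusOdd n k j).totalDegree = (n - 1) ^ 2 / 2 := by
  classical
  refine ⟨?_, fun j => second_part hn hodd j⟩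
  choose θ hθ hφ hP using fun i => exists_sgn (φ i) (htw i)
  simp only [hP] at hdist hdec ⊢
  have hd : ∀ i, DiagC (θ i) := fun i =>
    diagC_of_le (hθ i) (by rw [hdec]; exact iInf_le _ i)
  have hspan : ∀ l i, i ≠ l →
      Ideal.span (Set.range fun j : Fin n => (φ l) (pplusOdd n k j)) ≤ PP (θ i) := by
    intro l i hi
    rw [Ideal.span_le]
    rintro _ ⟨j, rfl⟩
    change (φ l) (pplusOdd n k j) ∈ PP (θ i)
    by_contra hcon
    have hS : ∑ u ∈ CC j, chi (θ i * θ l) u ≠ 0 := by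
      intro h0
      apply hcon
      rw [mem_PP]
      intro b
      have := Lam_p (θ i) (θ l) (hθ l) j 0 b
      rw [h0] at this
      simpa [hφ] using this
    have hc := fun u v => chi_const (u := u) (v := v) ((hθ i).mul (hθ l)) ((hd i).mul (hd l)) hn hS
    apply hi
    apply hdist
    apply le_antisymm
    · exact PP_le_of_const (hθ i) (by rw [mul_comm]; exact hc)
    · exact PP_le_of_const (hθ l) hc
  intro l
  apply le_antisymm
  · intro f hf
    have hf' : ∀ i, i ≠ l → f ∈ PP (θ i) := by
      intro i hi
      simp only [Submodule.mem_iInf] at hf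
      exact hf i hi
    -- existence of the correcting elements
    have main : ∀ b, Lam (θ l) b f ≠ 0 →
        ∃ g ∈ Ideal.span (Set.range fun j : Fin n => (φ l) (pplusOdd n k j)),
          ∀ b', Lam (θ l) b' g = if b = b' then 1 else 0 := by
      intro b hb
      have hlow : ∀ i, ∀ A ⊆ star i, A.card % 2 = b i % 2 → A.card ≤ b i := by
        intro i A hA hpar
        refine bound_aux hk (θ l) i hn f b ?_ hb A hA hpar
        intro S hS hS1 hS2
        have hJ : (⨅ i, PP (θ i)) ≤ PP (θ l * sg k S) := by
          rw [← hdec]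
          exact J_le_PP ((hθ l).mul (sg_sgn S)) ((hd l).mul (sg_diagC i S hS))
        rw [← Finset.inf_univ_eq_iInf] at hJ
        obtain ⟨i', -, hi'⟩ := ((PP_prime (θ l * sg k S)).inf_le').1 hJ
        have hne : i' ≠ l := by
          rintro rfl
          rcases star_const hk (hθ i') i S hS hi' with h | h
          · exact hS1 h
          · exact hS2 h
        exact (mem_PP _ _).1 (hi' (hf' i' hne)) b
      have hev : ∀ i, b i % 2 = 0 → n - 1 ≤ b i := by
        intro i hi
        have := hlow i (star i) (Finset.Subset.refl _)
        rw [star_card] at this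
        obtain ⟨m, hm⟩ := hodd
        exact this (by omega)
      have hod : ∀ i, b i % 2 = 1 → n - 2 ≤ b i := by
        intro i hi
        obtain ⟨s, hs⟩ : (star i).Nonempty := by
          rw [← Finset.card_pos, star_card]; omega
        have := hlow i ((star i).erase s) (Finset.erase_subset _ _)
        rw [Finset.card_erase_of_mem hs, star_card] at this
        obtain ⟨m, hm⟩ := hodd
        have := this (by omega)
        omega
      obtain ⟨v, hv⟩ : ∃ v, VN n v = b := by
        by_contra hcon
        apply hb
        rw [Lam_eq]
        apply Finset.sum_eq_zero
        intro u _
        rw [if_neg fun h => hcon ⟨u, h⟩]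
      have hsum : ∑ i, b i = 2 * ∑ s, v s := by rw [← hv, sum_VN]
      obtain ⟨j, hj⟩ : ∃ j, b j % 2 = 0 := by
        by_contra hcon
        push Not at hcon
        have h1 : (∑ i, b i) % 2 = (∑ i : Fin n, 1) % 2 := by
          rw [Finset.sum_nat_mod]
          congr 1
          exact Finset.sum_congr rfl fun i _ => by have := hcon i; omega
        simp at h1
        obtain ⟨m, hm⟩ := hodd
        omega
      have hle : bj j ≤ b := by
        intro i
        simp only [bj]
        split_ifs with hi
        · subst hi
          have := hev i hj
          omega
        · rcases Nat.mod_two_eq_zero_or_one (b i) with h | h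
          · have := hev i h
            omega
          · have := hod i h
            omega
      obtain ⟨c', hc'⟩ := exists_add_of_le hle
      have hc2 : ∃ N, ∑ i, c' i = 2 * N := by
        have h1 : ∑ i, b i = ∑ i, bj j i + ∑ i, c' i := by
          rw [hc', ← Finset.sum_add_distrib]; rfl
        have h2 : Even ((n - 1) ^ 2) := by
          obtain ⟨m, hm⟩ := hodd
          have : n - 1 = 2 * m := by omega
          rw [this, mul_pow]
          exact ⟨2 * m ^ 2, by ring⟩
        rw [bj_sum hn] at h1
        obtain ⟨t, ht⟩ := h2
        exact ⟨∑ s, v s - t, by omega⟩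
      obtain ⟨N, hN⟩ := hc2
      obtain ⟨w, hw⟩ := exists_VN N c' hN
      have hcard := CC_card_ne (k := k) hk hn hodd j
      refine ⟨C (chi (θ l) w * ((CC j).card : k)⁻¹) *
        (monomial w 1 * (φ l) (pplusOdd n k j)), ?_, ?_⟩
      · exact Ideal.mul_mem_left _ _ (Ideal.mul_mem_left _ _ (Ideal.subset_span ⟨j, rfl⟩))
      · intro b'
        rw [hφ, Lam_C_mul, Lam_p _ _ (hθ l), hw, (hθ l).mul_self]
        have : c' + bj j = b := by rw [hc', add_comm]
        rw [this]
        split_ifs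
        · simp only [chi_one, Finset.sum_const, nsmul_eq_mul, mul_one]
          have := (hθ l).chi_sq w
          field_simp
          linear_combination this
        · simp
    choose! g hg1 hg2 using main
    let B := (f.support.image (VN n)).filter fun b => Lam (θ l) b f ≠ 0
    let G := ∑ b ∈ B, C (Lam (θ l) b f) * g b
    have hG : G ∈ Ideal.span (Set.range fun j : Fin n => (φ l) (pplusOdd n k j)) :=
      Ideal.sum_mem _ fun b hb => Ideal.mul_mem_left _ _ (hg1 b (Finset.mem_filter.1 hb).2)
    have hsub : f - G ∈ Jideal n k := by
      rw [hdec, Submodule.mem_iInf]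
      intro i
      by_cases hi : i = l
      · subst hi
        rw [mem_PP]
        intro b'
        rw [Lam_sub, Lam_sum]
        have : ∀ b ∈ B, Lam (θ i) b' (C (Lam (θ i) b f) * g b) =
            if b = b' then Lam (θ i) b f else 0 := by
          intro b hb
          rw [Lam_C_mul, hg2 b (Finset.mem_filter.1 hb).2]
          simp
        rw [Finset.sum_congr rfl this, Finset.sum_ite_eq' B b']
        split_ifs with hb
        · simp
        · rw [sub_zero]
          by_contra hne
          apply hb
          refine Finset.mem_filter.2 ⟨?_, hne⟩
          rw [Finset.mem_image]
          by_contra hcon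
          apply hne
          rw [Lam_eq]
          apply Finset.sum_eq_zero
          intro u hu
          rw [if_neg fun h => hcon ⟨u, hu, h⟩]
      · refine Ideal.sub_mem _ (hf' i hi) ?_
        exact hspan l i hi hG
    have : f = (f - G) + G := by ring
    rw [this]
    exact Submodule.add_mem_sup hsub hG
  · refine le_iInf fun i => le_iInf fun hi => ?_
    refine sup_le ?_ (hspan l i hi)
    rw [hdec]; exact iInf_le _ i



end Veronese
end
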